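/- arXiv:2106.12977 — 2 statements merged into one kernel-verified Lean document; each statement's English description precedes it below -/
import Mathlib

section
/- If the digraph D(S*) on the normal form S* contains no directed cycle, then every worker belongs to exactly one pair of S* and every firm belongs to exactly one pair of S*. -/
/-- `(w,f)` blocks the matching `μ`: `f ≻_w μ(w)` and `w ≻_f μ⁻¹(f)`.
`prefW w f f'` means worker `w` strictly prefers firm `f` to firm `f'`;
`prefF f w w'` means firm `f` strictly prefers worker `w` to worker `w'`. -/
def Blocks {W F : Type*} (prefW : W → F → F → Prop) (prefF : F → W → W → Prop)
    (μ : W ≃ F) (w : W) (f : F) : Prop :=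
  prefW w f (μ w) ∧ prefF f w (μ.symm f)

/-- A matching is stable if no pair blocks it. -/
def IsStableMatching {W F : Type*} (prefW : W → F → F → Prop)
    (prefF : F → W → W → Prop) (μ : W ≃ F) : Prop :=
  ∀ w f, ¬ Blocks prefW prefF μ w f

/-- A pair `(w,f)` is unattractive in `S`. -/
def Unattractive {W F : Type*} (prefW : W → F → F → Prop) (prefF : F → W → W → Prop)
    (S : Set (W × F)) (w : W) (f : F) : Prop :=
  (∃ f', (w, f') ∈ S ∧ prefW w f' f ∧
      ∀ w', w' ≠ w → (w', f') ∈ S → prefF f' w w') ∨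
  (∃ w', (w', f) ∈ S ∧ prefF f w' w ∧
      ∀ f'', f'' ≠ f → (w', f'') ∈ S → prefW w' f f'')

/-- `delta S` is `S` with all pairs unattractive in `S` removed. -/
def delta {W F : Type*} (prefW : W → F → F → Prop) (prefF : F → W → W → Prop)
    (S : Set (W × F)) : Set (W × F) :=
  {p ∈ S | ¬ Unattractive prefW prefF S p.1 p.2}

/-- The normal form: the fixed point of `delta` reached by iterating from `W × F`.
Since `delta S ⊆ S` and `W × F` is finite, `Fintype.card (W × F)` iterations suffice. -/
def NormalForm (W F : Type*) [Fintype W] [Fintype F]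
    (prefW : W → F → F → Prop) (prefF : F → W → W → Prop) : Set (W × F) :=
  (delta prefW prefF)^[Fintype.card (W × F)] Set.univ

/-- `μ` is `S`-stable: `S`-admissible and no pair of `S` blocks it within `S`. -/
def SStable {W F : Type*} (prefW : W → F → F → Prop) (prefF : F → W → W → Prop)
    (S : Set (W × F)) (μ : W ≃ F) : Prop :=
  (∀ w, (w, μ w) ∈ S) ∧
  ∀ w f, (w, f) ∈ S → ¬ (prefW w f (μ w) ∧ prefF f w (μ.symm f))

/-- Arcs of the matching digraph `D(S)`: from `(w,f)` to `(w,f')` whenever `f' ≻_w f`,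
and from `(w,f)` to `(w',f)` whenever `w' ≻_f w`. -/
def Arc {W F : Type*} (prefW : W → F → F → Prop) (prefF : F → W → W → Prop)
    (S : Set (W × F)) (p q : W × F) : Prop :=
  p ∈ S ∧ q ∈ S ∧
    ((p.1 = q.1 ∧ prefW p.1 q.2 p.2) ∨ (p.2 = q.2 ∧ prefF p.2 q.1 p.1))

/-- `D(S)` contains a directed cycle: distinct vertices `c 0, …, c (n-1)` with `n ≥ 1`,
`c n = c 0`, and an arc from each vertex to the next. -/
def HasDirectedCycle {W F : Type*} (prefW : W → F → F → Prop)
    (prefF : F → W → W → Prop) (S : Set (W × F)) : Prop :=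
  ∃ (n : ℕ) (c : Fin (n + 1) → W × F), 0 < n ∧
    Function.Injective (fun i : Fin n => c i.castSucc) ∧
    c (Fin.last n) = c 0 ∧
    ∀ i : Fin n, Arc prefW prefF S (c i.castSucc) (c i.succ)

/-- The preference lists possess a cycle: there are `k ≥ 2`, distinct workers
`w_1, …, w_k` and distinct firms `f_1, …, f_k` (indexed by `ZMod k`) with
`f_{j+1} ≻_{w_j} f_j` and `w_j ≻_{f_j} w_{j-1}` for all `j`, indices modulo `k`. -/
def PrefCycle {W F : Type*} (prefW : W → F → F → Prop)
    (prefF : F → W → W → Prop) : Prop :=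
  ∃ k : ℕ, 2 ≤ k ∧ ∃ (ws : ZMod k → W) (fs : ZMod k → F),
    Function.Injective ws ∧ Function.Injective fs ∧
    ∀ j : ZMod k, prefW (ws j) (fs (j + 1)) (fs j) ∧ prefF (fs j) (ws j) (ws (j - 1))

/-!
`Δ` preserves the property that every pair outside `S` is unattractive in `S`: if some firm better
than `f` has `w` as its favourite, the best such firm for `w` survives `Δ`. So if `w` had no partner
in `S*`, each firm `f` would be the favourite of some worker `g f` whom it ranks above `w`; a worker
has at most one favourite, so `g` would be injective, hence onto by counting, and would hit `w`.

A sink of `D(S*)` is a pair of mutual favourites, so a pair with an arc into it would be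
unattractive; as `S*` is a fixed point of `Δ`, no arc enters a sink. In a finite acyclic digraph
every arc leads on to a sink, so `D(S*)` has no arcs at all: every agent has at most one partner.
-/

section Iteration

variable {α : Type*} [Finite α]

theorem isFixedPt_iterate_card_of_subset {g : Set α → Set α} (hg : ∀ s, g s ⊆ s) (s : Set α) :
    Function.IsFixedPt g (g^[Nat.card α] s) := by
  have hsub : ∀ m, g^[m + 1] s ⊆ g^[m] s := fun m => by
    rw [Function.iterate_succ_apply']
    exact hg _
  have hmono : Monotone fun m => (g^[m] s)ᶜ.ncard :=
    monotone_nat_of_le_succ fun m => Set.ncard_le_ncard (Set.compl_subset_compl.mpr (hsub m))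
  have hfix : ∀ m, (g^[m] s)ᶜ.ncard = (g^[m + 1] s)ᶜ.ncard →
      Function.IsFixedPt g (g^[m] s) := fun m h => by
    have := Set.eq_of_subset_of_ncard_le (Set.compl_subset_compl.mpr (hsub m)) h.ge
    rw [Function.IsFixedPt, ← Function.iterate_succ_apply' g]
    exact (compl_injective this).symm
  have hstab : (g^[Nat.card α + 1] s)ᶜ.ncard = (g^[Nat.card α] s)ᶜ.ncard :=
    Nat.stabilises_of_monotone hmono (fun _ => Set.ncard_le_card _)
      (fun m h => by simp only [Function.iterate_succ_apply', (hfix m h).eq]) (Nat.le_succ _)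
  exact hfix _ hstab.symm

theorem exists_eq_add_and_injective_fin (v : ℕ → α) :
    ∃ i n, 0 < n ∧ v i = v (i + n) ∧ Function.Injective fun k : Fin n => v (i + k) := by
  classical
  have hreturn : ∃ n, 0 < n ∧ ∃ i, v i = v (i + n) := by
    by_contra! h
    refine not_injective_infinite_finite v (.of_lt_imp_ne fun a b hab => ?_)
    simpa only [Nat.add_sub_cancel' hab.le] using h (b - a) (Nat.sub_pos_of_lt hab) a
  -- Inside a shortest return there is no repetition, as it would be a shorter return.
  obtain ⟨hpos, i, hi⟩ := Nat.find_spec hreturn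
  refine ⟨i, _, hpos, hi, .of_lt_imp_ne fun a b hab heq => ?_⟩
  refine Nat.find_min hreturn (m := b - a) (by omega) ⟨by omega, i + a, ?_⟩
  rwa [add_assoc, Nat.add_sub_cancel' (Fin.le_def.mp hab.le)]

end Iteration

section Favourite

variable {α : Type*} {r : α → α → Prop} {A B : Set α} {a b : α}

/-- `a` is the favourite element of `A` for an agent with strict preference `r`: it lies in `A` and
is preferred to every other element of `A`. Both clauses of `Unattractive` ask that an agent be the
favourite among the partners that remain in `S`. -/
def IsFavourite (r : α → α → Prop) (A : Set α) (a : α) : Prop :=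
  a ∈ A ∧ ∀ b, b ≠ a → b ∈ A → r a b

theorem IsFavourite.anti (h : IsFavourite r A a) (hBA : B ⊆ A) (ha : a ∈ B) :
    IsFavourite r B a :=
  ⟨ha, fun b hne hb => h.2 b hne (hBA hb)⟩

theorem IsFavourite.not_rel [Std.Asymm r] (h : IsFavourite r A a) (hb : b ∈ A) : ¬ r b a := by
  rcases eq_or_ne b a with rfl | hne
  · exact irrefl b
  · exact asymm (h.2 b hne hb)

theorem IsFavourite.unique [Std.Asymm r] (ha : IsFavourite r A a) (hb : IsFavourite r A b) :
    a = b := by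
  by_contra hne
  exact hb.not_rel ha.1 (ha.2 b (Ne.symm hne) hb.1)

theorem isFavourite_of_forall_not_rel [Std.Trichotomous r] (ha : a ∈ A)
    (h : ∀ b ∈ A, ¬ r b a) : IsFavourite r A a :=
  ⟨ha, fun b hne hb => ((trichotomous_of r a b).resolve_right fun hab =>
    hab.elim (fun heq => hne heq.symm) (h b hb))⟩

end Favourite

section Matching

variable {W F : Type*} {prefW : W → F → F → Prop} {prefF : F → W → W → Prop}
  {S : Set (W × F)} {w : W} {f : F}

theorem unattractive_iff_exists_isFavourite :
    Unattractive prefW prefF S w f ↔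
      (∃ f', prefW w f' f ∧ IsFavourite (prefF f') ((·, f') ⁻¹' S) w) ∨
      (∃ w', prefF f w' w ∧ IsFavourite (prefW w') ((w', ·) ⁻¹' S) f) :=
  or_congr (exists_congr fun _ => and_left_comm) (exists_congr fun _ => and_left_comm)

theorem unattractive_preimage_swap :
    Unattractive prefF prefW (Prod.swap ⁻¹' S) f w ↔ Unattractive prefW prefF S w f :=
  or_comm

theorem delta_preimage_swap :
    delta prefF prefW (Prod.swap ⁻¹' S) = Prod.swap ⁻¹' delta prefW prefF S :=
  Set.ext fun _ => and_congr_right fun _ => not_congr unattractive_preimage_swap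

theorem arc_preimage_swap {p q : F × W} :
    Arc prefF prefW (Prod.swap ⁻¹' S) p q ↔ Arc prefW prefF S p.swap q.swap :=
  and_congr_right fun _ => and_congr_right fun _ => or_comm

theorem isFavourite_of_forall_not_arc [Std.Trichotomous (prefW w)] (hwf : (w, f) ∈ S)
    (hsink : ∀ r, ¬ Arc prefW prefF S (w, f) r) : IsFavourite (prefW w) ((w, ·) ⁻¹' S) f :=
  isFavourite_of_forall_not_rel hwf fun f' hf' hlt =>
    hsink (w, f') ⟨hwf, hf', Or.inl ⟨rfl, hlt⟩⟩

theorem delta_subset (S : Set (W × F)) : delta prefW prefF S ⊆ S :=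
  Set.sep_subset _ _

theorem exists_isFavourite_delta [Finite F] [IsStrictOrder F (prefW w)]
    [∀ f, Std.Asymm (prefF f)]
    (h : ∃ f', prefW w f' f ∧ IsFavourite (prefF f') ((·, f') ⁻¹' S) w) :
    ∃ f', prefW w f' f ∧ IsFavourite (prefF f') ((·, f') ⁻¹' delta prefW prefF S) w := by
  obtain ⟨m, ⟨hmf, hm⟩, hbest⟩ :=
    (Finite.wellFounded_of_trans_of_irrefl (prefW w)).has_min
      {f' | prefW w f' f ∧ IsFavourite (prefF f') ((·, f') ⁻¹' S) w} h
  have hattractive : ¬ Unattractive prefW prefF S w m := by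
    rw [unattractive_iff_exists_isFavourite]
    rintro (⟨f', hf'm, hf'⟩ | ⟨w', hw'w, hw'⟩)
    · exact hbest f' ⟨_root_.trans hf'm hmf, hf'⟩ hf'm
    · exact hm.not_rel hw'.1 hw'w
  exact ⟨m, hmf, hm.anti (Set.preimage_mono (delta_subset S)) ⟨hm.1, hattractive⟩⟩

theorem Unattractive.delta [Finite W] [Finite F] [∀ w, IsStrictOrder F (prefW w)]
    [∀ f, IsStrictOrder W (prefF f)] (h : Unattractive prefW prefF S w f) :
    Unattractive prefW prefF (delta prefW prefF S) w f := by
  rw [unattractive_iff_exists_isFavourite] at h ⊢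
  refine h.imp exists_isFavourite_delta fun h' => ?_
  have := exists_isFavourite_delta (prefW := prefF) (prefF := prefW) (S := Prod.swap ⁻¹' S) h'
  rwa [delta_preimage_swap] at this

/-- Every pair outside `S` is unattractive in `S`: the invariant of the iteration of `Δ` that leaves
every agent a partner in the normal form. -/
def UnattractiveOutside (prefW : W → F → F → Prop) (prefF : F → W → W → Prop)
    (S : Set (W × F)) : Prop :=
  ∀ w f, (w, f) ∉ S → Unattractive prefW prefF S w f

namespace UnattractiveOutside

theorem preimage_swap (hS : UnattractiveOutside prefW prefF S) :
    UnattractiveOutside prefF prefW (Prod.swap ⁻¹' S) :=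
  fun f w hfw => unattractive_preimage_swap.mpr (hS w f hfw)

theorem delta [Finite W] [Finite F] [∀ w, IsStrictOrder F (prefW w)]
    [∀ f, IsStrictOrder W (prefF f)] (hS : UnattractiveOutside prefW prefF S) :
    UnattractiveOutside prefW prefF (delta prefW prefF S) := by
  intro w f hwf
  have h : Unattractive prefW prefF S w f := by
    by_cases hmem : (w, f) ∈ S
    · exact not_not.mp fun hattractive => hwf ⟨hmem, hattractive⟩
    · exact hS w f hmem
  exact h.delta

theorem exists_mem [Finite W] (hcard : Nat.card W ≤ Nat.card F) [∀ w, Std.Asymm (prefW w)]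
    [∀ f, Std.Irrefl (prefF f)] (hS : UnattractiveOutside prefW prefF S) (w : W) :
    ∃ f, (w, f) ∈ S := by
  by_contra! hw
  have hadmirer : ∀ f, ∃ w', prefF f w' w ∧ IsFavourite (prefW w') ((w', ·) ⁻¹' S) f := fun f =>
    (unattractive_iff_exists_isFavourite.mp (hS w f (hw f))).resolve_left
      fun ⟨f', _, hf'⟩ => hw f' hf'.1
  choose g hgw hg using hadmirer
  have hinj : Function.Injective g := fun a b hab => (hg a).unique (hab ▸ hg b)
  obtain ⟨f, rfl⟩ := (hinj.bijective_of_nat_card_le hcard).surjective w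
  exact irrefl (g f) (hgw f)

theorem existsUnique_mem [Finite W] (hcard : Nat.card W ≤ Nat.card F)
    [∀ w, Std.Asymm (prefW w)] [∀ w, Std.Trichotomous (prefW w)] [∀ f, Std.Irrefl (prefF f)]
    (hS : UnattractiveOutside prefW prefF S) (harc : ∀ p q, ¬ Arc prefW prefF S p q) (w : W) :
    ∃! f, (w, f) ∈ S := by
  have hfav : ∀ f, (w, f) ∈ S → IsFavourite (prefW w) ((w, ·) ⁻¹' S) f := fun f hf =>
    isFavourite_of_forall_not_arc hf (harc (w, f))
  obtain ⟨f, hf⟩ := hS.exists_mem hcard w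
  exact ⟨f, hf, fun f' hf' => (hfav f' hf').unique (hfav f hf)⟩

end UnattractiveOutside

theorem unattractiveOutside_normalForm [Fintype W] [Fintype F]
    [∀ w, IsStrictOrder F (prefW w)] [∀ f, IsStrictOrder W (prefF f)] :
    UnattractiveOutside prefW prefF (NormalForm W F prefW prefF) :=
  Function.Iterate.rec (UnattractiveOutside prefW prefF)
    (fun _ _ h => absurd (Set.mem_univ _) h) (fun _ => UnattractiveOutside.delta) _

theorem isFixedPt_delta_normalForm [Fintype W] [Fintype F] :
    Function.IsFixedPt (delta prefW prefF) (NormalForm W F prefW prefF) := by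
  rw [NormalForm, ← Nat.card_eq_fintype_card]
  exact isFixedPt_iterate_card_of_subset delta_subset Set.univ

theorem hasDirectedCycle_of_forall_arc_succ [Finite W] [Finite F] {v : ℕ → W × F}
    (hv : ∀ n, Arc prefW prefF S (v n) (v (n + 1))) : HasDirectedCycle prefW prefF S := by
  obtain ⟨i, n, hpos, hreturn, hinj⟩ := exists_eq_add_and_injective_fin v
  exact ⟨n, fun k => v (i + k), hpos, hinj, hreturn.symm, fun k => hv (i + k)⟩

theorem wellFounded_swap_arc_of_acyclic [Finite W] [Finite F]
    (hacyc : ¬ HasDirectedCycle prefW prefF S) :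
    WellFounded (Function.swap (Arc prefW prefF S)) :=
  wellFounded_iff_isEmpty_descending_chain.mpr
    ⟨fun v => hacyc (hasDirectedCycle_of_forall_arc_succ v.2)⟩

theorem not_arc_to_sink [∀ w, Std.Trichotomous (prefW w)] [∀ f, Std.Trichotomous (prefF f)]
    (hS : Function.IsFixedPt (delta prefW prefF) S) {q : W × F}
    (hsink : ∀ r, ¬ Arc prefW prefF S q r) (p : W × F) : ¬ Arc prefW prefF S p q := by
  obtain ⟨w, f⟩ := q
  rintro ⟨hp, hq, hpq⟩
  have hf : IsFavourite (prefW w) ((w, ·) ⁻¹' S) f := isFavourite_of_forall_not_arc hq hsink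
  have hw : IsFavourite (prefF f) ((·, f) ⁻¹' S) w :=
    isFavourite_of_forall_not_arc (S := Prod.swap ⁻¹' S) hq fun r hr =>
      hsink r.swap (arc_preimage_swap.mp hr)
  have hattractive : ¬ Unattractive prefW prefF S p.1 p.2 :=
    (hS.symm ▸ hp : p ∈ delta prefW prefF S).2
  rw [unattractive_iff_exists_isFavourite] at hattractive
  rcases p with ⟨w₀, f₀⟩
  rcases hpq with ⟨rfl, hlt⟩ | ⟨rfl, hlt⟩
  · exact hattractive (Or.inl ⟨f, hlt, hw⟩)
  · exact hattractive (Or.inr ⟨w, hlt, hf⟩)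

theorem not_arc_of_acyclic [Finite W] [Finite F] [∀ w, Std.Trichotomous (prefW w)]
    [∀ f, Std.Trichotomous (prefF f)] (hS : Function.IsFixedPt (delta prefW prefF) S)
    (hacyc : ¬ HasDirectedCycle prefW prefF S) (p q : W × F) : ¬ Arc prefW prefF S p q := by
  intro hpq
  obtain ⟨m, ⟨p', hp'm⟩, hmin⟩ := (wellFounded_swap_arc_of_acyclic hacyc).has_min
    {q | ∃ p, Arc prefW prefF S p q} ⟨q, p, hpq⟩
  have hsink : ∀ r, ¬ Arc prefW prefF S m r := fun r hmr => hmin r ⟨m, hmr⟩ hmr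
  exact not_arc_to_sink hS hsink p' hp'm

end Matching

/-- If `D(S*)` has no directed cycle, then every worker and every firm belongs to
exactly one pair of `S*`. -/
theorem singleton_of_acyclic_normalForm {W F : Type*} [Fintype W] [Fintype F] [Nonempty W]
    (hcard : Fintype.card W = Fintype.card F)
    (prefW : W → F → F → Prop) (prefF : F → W → W → Prop)
    (hW : ∀ w, IsStrictTotalOrder F (prefW w))
    (hF : ∀ f, IsStrictTotalOrder W (prefF f))
    (hacyc : ¬ HasDirectedCycle prefW prefF (NormalForm W F prefW prefF)) :
    (∀ w : W, ∃! f : F, (w, f) ∈ NormalForm W F prefW prefF) ∧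
      (∀ f : F, ∃! w : W, (w, f) ∈ NormalForm W F prefW prefF) := by
  have hout := unattractiveOutside_normalForm (prefW := prefW) (prefF := prefF)
  have harc := not_arc_of_acyclic isFixedPt_delta_normalForm hacyc
  have hcard' : Nat.card W = Nat.card F := by simpa only [Nat.card_eq_fintype_card] using hcard
  exact ⟨hout.existsUnique_mem hcard'.le harc,
    hout.preimage_swap.existsUnique_mem hcard'.ge fun p q hpq =>
      harc p.swap q.swap (arc_preimage_swap.mp hpq)⟩
end

section
/- If the preference lists of a matching problem do not possess a cycle, then the matching problem has exactly one stable matching. -/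
/-!
A stable matching is the same thing as a kernel of the matching digraph `D(W × F)`: a pair outside
the matching does not block it exactly when one of its two members prefers the assigned partner,
that is, when it has an arc into the matching. Conversely, a kernel contains at most one pair for
each worker and each firm, and it cannot miss both a worker and a firm, so `|W| = |F|` makes it the
graph of a matching.

A digraph without infinite paths has exactly one kernel, by well-founded recursion along its arcs.
Here this follows from acyclicity: if every pair of a nonempty set `S` had an outgoing arc within
`S`, then passing from a worker to its favourite firm in `S`, and from that firm to its favourite
worker in `S`, would be a fixed-point-free self-map of a finite set, and any of its periodic orbits
would be a cycle of the preference lists.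
-/

section Kernel

variable {α : Type*} {r : α → α → Prop}

/-- `K` is a kernel of the digraph with arc relation `r`: there is no arc between two vertices of
`K`, and every vertex outside `K` has an arc into `K`. Both conditions are encoded in one
equivalence. -/
def IsKernel (r : α → α → Prop) (K : Set α) : Prop :=
  ∀ a, a ∈ K ↔ ∀ b, r a b → b ∉ K

theorem existsUnique_isKernel (hr : WellFounded (Function.swap r)) : ∃! K, IsKernel r K := by
  let mem : α → Prop := hr.fix fun a ih => ∀ b (hab : r a b), ¬ ih b hab
  have mem_iff (a : α) : mem a ↔ ∀ b, r a b → ¬ mem b := by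
    simp only [mem]
    rw [hr.fix_eq]
  refine ⟨{a | mem a}, mem_iff, fun K hK => Set.ext fun a => ?_⟩
  induction a using hr.induction with
  | _ a ih =>
    calc a ∈ K ↔ ∀ b, r a b → b ∉ K := hK a
      _ ↔ ∀ b, r a b → ¬ mem b := forall₂_congr fun b hab => not_congr (ih b hab)
      _ ↔ mem a := (mem_iff a).symm

end Kernel

section Order

variable {α : Type*} {r : α → α → Prop}

theorem rel_iff_not_swap_of_ne [Std.Asymm r] [Std.Trichotomous r] {a b : α} (h : a ≠ b) :
    r b a ↔ ¬ r a b :=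
  ⟨asymm_of r, fun hab => by_contra fun hba => h (Std.Trichotomous.trichotomous a b hab hba)⟩

theorem isWellOrder_of_finite [Finite α] [IsStrictTotalOrder α r] : IsWellOrder α r where
  wf := Finite.wellFounded_of_trans_of_irrefl r

end Order

section Periodic

variable {α : Type*}

theorem periodicPts_nonempty [Finite α] [Nonempty α] (T : α → α) :
    (Function.periodicPts T).Nonempty := by
  obtain ⟨x⟩ := ‹Nonempty α›
  obtain ⟨m, n, hmn, heq⟩ : ∃ m n, m < n ∧ T^[m] x = T^[n] x :=
    Set.finite_univ.exists_lt_map_eq_of_forall_mem (f := fun n => T^[n] x) fun _ => Set.mem_univ _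
  refine ⟨T^[m] x, n - m, Nat.sub_pos_of_lt hmn, ?_⟩
  rw [Function.IsPeriodicPt, Function.IsFixedPt, ← Function.iterate_add_apply,
    Nat.sub_add_cancel hmn.le, heq]

theorem exists_injective_zmod_of_forall_ne [Finite α] [Nonempty α] {T : α → α}
    (hT : ∀ x, T x ≠ x) :
    ∃ k : ℕ, 2 ≤ k ∧ ∃ c : ZMod k → α, Function.Injective c ∧ ∀ j, c (j + 1) = T (c j) := by
  obtain ⟨x, hx⟩ := periodicPts_nonempty T
  set k := Function.minimalPeriod T x
  have hpos : 0 < k := Function.minimalPeriod_pos_of_mem_periodicPts hx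
  have hone : k ≠ 1 := fun h => hT x (Function.minimalPeriod_eq_one_iff_isFixedPt.1 h)
  have : NeZero k := ⟨hpos.ne'⟩
  have : Fact (1 < k) := ⟨by lia⟩
  refine ⟨k, by lia, fun j => T^[j.val] x, fun i j hij => ?_, fun j => ?_⟩
  · exact ZMod.val_injective k
      (Function.iterate_injOn_Iio_minimalPeriod i.val_lt j.val_lt hij)
  · calc T^[(j + 1).val] x = T^[(j.val + 1) % k] x := by rw [ZMod.val_add, ZMod.val_one]
      _ = T^[j.val + 1] x := Function.iterate_mod_minimalPeriod_eq
      _ = T (T^[j.val] x) := Function.iterate_succ_apply' T _ x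

end Periodic

theorem exists_equiv_graph_eq {α β : Type*} [Fintype α] [Fintype β] {R : SetRel α β}
    (hcard : Fintype.card α = Fintype.card β) (hfun : ∀ a, ∃! b, (a, b) ∈ R)
    (hinj : ∀ ⦃a a' b⦄, (a, b) ∈ R → (a', b) ∈ R → a = a') :
    ∃ e : α ≃ β, Function.graph e = R := by
  obtain ⟨f, rfl, -⟩ := R.exists_graph_eq_iff.2 hfun
  have hf : Function.Injective f := fun a a' h => hinj (b := f a') h rfl
  exact ⟨.ofBijective f ((Fintype.bijective_iff_injective_and_card f).2 ⟨hf, hcard⟩), rfl⟩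

section Matching

variable {W F : Type*} {prefW : W → F → F → Prop} {prefF : F → W → W → Prop}

theorem arc_univ_iff {w w' : W} {f f' : F} :
    Arc prefW prefF Set.univ (w, f) (w', f') ↔
      (w = w' ∧ prefW w f' f) ∨ (f = f' ∧ prefF f w' w) := by
  simp only [Arc, Set.mem_univ, true_and]

theorem forall_arc_notMem_graph_iff {μ : W ≃ F} {w : W} {f : F} :
    (∀ p, Arc prefW prefF Set.univ (w, f) p → p ∉ Function.graph μ) ↔
      ¬ prefW w (μ w) f ∧ ¬ prefF f (μ.symm f) w := by
  simp only [Prod.forall, arc_univ_iff, Function.mem_graph]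
  constructor
  · intro h
    exact ⟨fun hw => h _ _ (.inl ⟨rfl, hw⟩) rfl,
      fun hf => h _ _ (.inr ⟨rfl, hf⟩) (μ.apply_symm_apply f)⟩
  · rintro ⟨hw, hf⟩ w' f' (⟨rfl, h⟩ | ⟨rfl, h⟩) rfl
    · exact hw h
    · exact hf (by rwa [μ.symm_apply_apply])

theorem isStableMatching_iff_isKernel_graph
    [∀ w, Std.Asymm (prefW w)] [∀ w, Std.Trichotomous (prefW w)]
    [∀ f, Std.Asymm (prefF f)] [∀ f, Std.Trichotomous (prefF f)] {μ : W ≃ F} :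
    IsStableMatching prefW prefF μ ↔
      IsKernel (Arc prefW prefF Set.univ) (Function.graph μ) := by
  simp only [IsStableMatching, Blocks, IsKernel, Prod.forall (p := fun p => p ∈ _ ↔ _),
    forall_arc_notMem_graph_iff, Function.mem_graph]
  refine forall₂_congr fun w f => ?_
  by_cases hwf : μ w = f
  · subst hwf
    simp [irrefl_of (prefW w), irrefl_of (prefF (μ w))]
  · have hfw : μ.symm f ≠ w := fun h => hwf (μ.symm_apply_eq.1 h).symm
    rw [rel_iff_not_swap_of_ne (r := prefW w) hwf, rel_iff_not_swap_of_ne (r := prefF f) hfw,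
      iff_false_left hwf]

namespace IsKernel

variable {K : Set (W × F)} (hK : IsKernel (Arc prefW prefF Set.univ) K)
include hK

theorem firm_unique [∀ w, Std.Trichotomous (prefW w)] ⦃w : W⦄ ⦃f f' : F⦄
    (h : (w, f) ∈ K) (h' : (w, f') ∈ K) : f = f' :=
  Std.Trichotomous.trichotomous (r := prefW w) f f'
    (fun hf => (hK _).1 h' _ (arc_univ_iff.2 (.inl ⟨rfl, hf⟩)) h)
    (fun hf' => (hK _).1 h _ (arc_univ_iff.2 (.inl ⟨rfl, hf'⟩)) h')

theorem worker_unique [∀ f, Std.Trichotomous (prefF f)] ⦃w w' : W⦄ ⦃f : F⦄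
    (h : (w, f) ∈ K) (h' : (w', f) ∈ K) : w = w' :=
  Std.Trichotomous.trichotomous (r := prefF f) w w'
    (fun hw => (hK _).1 h' _ (arc_univ_iff.2 (.inr ⟨rfl, hw⟩)) h)
    (fun hw' => (hK _).1 h _ (arc_univ_iff.2 (.inr ⟨rfl, hw'⟩)) h')

theorem forall_exists_firm_or_forall_exists_worker :
    (∀ w, ∃ f, (w, f) ∈ K) ∨ ∀ f, ∃ w, (w, f) ∈ K := by
  by_contra! h
  obtain ⟨⟨w, hw⟩, f, hf⟩ := h
  refine hw f ((hK _).2 ?_)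
  rintro ⟨w', f'⟩ ⟨-, -, ⟨rfl, -⟩ | ⟨rfl, -⟩⟩
  exacts [hw f', hf w']

theorem exists_equiv_graph [Fintype W] [Fintype F]
    [∀ w, Std.Trichotomous (prefW w)] [∀ f, Std.Trichotomous (prefF f)]
    (hcard : Fintype.card W = Fintype.card F) : ∃ μ : W ≃ F, Function.graph μ = K := by
  rcases hK.forall_exists_firm_or_forall_exists_worker with hw | hf
  · exact exists_equiv_graph_eq hcard
      (fun w => existsUnique_of_exists_of_unique (hw w) fun _ _ h h' => hK.firm_unique h h')
      hK.worker_unique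
  · obtain ⟨ν, hν⟩ := exists_equiv_graph_eq (R := SetRel.inv K) hcard.symm
      (fun f => existsUnique_of_exists_of_unique (hf f) fun _ _ h h' => hK.worker_unique h h')
      fun _ _ _ h h' => hK.firm_unique h h'
    exact ⟨ν.symm, by rw [Equiv.graph_inv, hν, SetRel.inv_inv]⟩

end IsKernel

theorem prefCycle_of_alternating_improvement [∀ f, Std.Irrefl (prefF f)]
    {A : Set W} {B : Set F} [Finite A] [Nonempty A] {G : A → B} {H : B → A}
    (hH : ∀ a, prefF (G a) (H (G a)) a) (hG : ∀ b, prefW (H b) (G (H b)) b) :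
    PrefCycle prefW prefF := by
  have hne (a : A) : H (G a) ≠ a := fun h => irrefl_of (prefF (G a)) a <| by
    simpa only [h] using hH a
  obtain ⟨k, hk, c, hc, hc_succ⟩ := exists_injective_zmod_of_forall_ne hne
  have hc_pred (j : ZMod k) : H (G (c (j - 1))) = c j := by rw [← hc_succ, sub_add_cancel]
  refine ⟨k, hk, fun j => c j, fun j => G (c (j - 1)), Subtype.val_injective.comp hc,
    fun i j hij => hc ?_, fun j => ⟨?_, ?_⟩⟩
  · rw [← hc_pred i, ← hc_pred j, Subtype.val_injective hij]
  · simpa only [hc_pred, add_sub_cancel_right] using hG (G (c (j - 1)))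
  · simpa only [hc_pred] using hH (c (j - 1))

variable [Finite W] [∀ w, IsWellOrder F (prefW w)] [∀ f, IsWellOrder W (prefF f)]

theorem exists_forall_not_arc (hacyc : ¬ PrefCycle prefW prefF) {S : Set (W × F)}
    (hS : S.Nonempty) : ∃ p ∈ S, ∀ q, ¬ Arc prefW prefF S p q := by
  by_contra! hout
  let A : Set W := {w | {f | (w, f) ∈ S}.Nonempty}
  let B : Set F := {f | {w | (w, f) ∈ S}.Nonempty}
  choose g hgS hg using fun w : A =>
    (WellFounded.isWellOrder_iff_exists_not_lt_and_eq_or_gt (r := prefW w)).1 inferInstance _ w.2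
  choose h hhS hh using fun f : B =>
    (WellFounded.isWellOrder_iff_exists_not_lt_and_eq_or_gt (r := prefF f)).1 inferInstance _ f.2
  let G (a : A) : B := ⟨g a, a, hgS a⟩
  let H (b : B) : A := ⟨h b, b, hhS b⟩
  -- A fixed point would give a pair of mutual favourites in `S`, which has no outgoing arc.
  have hne (a : A) : H (G a) ≠ a := by
    intro hfix
    obtain ⟨⟨w, f⟩, -, hq, ⟨rfl, hf⟩ | ⟨rfl, hw⟩⟩ := hout (a, g a) (hgS a)
    · exact (hg a f hq).1 hf
    · exact (hh (G a) w hq).1 (by rwa [show h (G a) = a from congrArg Subtype.val hfix])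
  have hH (a : A) : prefF (G a) (H (G a)) a :=
    (hh (G a) a (hgS a)).2.resolve_left fun heq => hne a (Subtype.ext heq)
  have hG (b : B) : prefW (H b) (G (H b)) b :=
    (hg (H b) b (hhS b)).2.resolve_left fun heq => hne (H b) (congrArg H (Subtype.ext heq))
  have : Nonempty A := let ⟨p, hp⟩ := hS; ⟨p.1, p.2, hp⟩
  exact hacyc (prefCycle_of_alternating_improvement hH hG)

theorem wellFounded_swap_arc (hacyc : ¬ PrefCycle prefW prefF) :
    WellFounded (Function.swap (Arc prefW prefF Set.univ)) :=
  WellFounded.wellFounded_iff_has_min.2 fun _ hS =>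
    let ⟨p, hp, hsink⟩ := exists_forall_not_arc hacyc hS
    ⟨p, hp, fun q hq ⟨_, _, hpq⟩ => hsink q ⟨hp, hq, hpq⟩⟩

end Matching

/-- Acyclic preference lists imply a unique stable matching. -/
theorem unique_stable_of_acyclic {W F : Type*} [Fintype W] [Fintype F] [Nonempty W]
    (hcard : Fintype.card W = Fintype.card F)
    (prefW : W → F → F → Prop) (prefF : F → W → W → Prop)
    (hW : ∀ w, IsStrictTotalOrder F (prefW w))
    (hF : ∀ f, IsStrictTotalOrder W (prefF f))
    (hacyc : ¬ PrefCycle prefW prefF) :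
    ∃! μ : W ≃ F, IsStableMatching prefW prefF μ := by
  have (w : W) : IsWellOrder F (prefW w) := isWellOrder_of_finite
  have (f : F) : IsWellOrder W (prefF f) := isWellOrder_of_finite
  obtain ⟨K, hK, hK_unique⟩ := existsUnique_isKernel (wellFounded_swap_arc hacyc)
  obtain ⟨μ, rfl⟩ := hK.exists_equiv_graph hcard
  refine ⟨μ, isStableMatching_iff_isKernel_graph.2 hK, fun ν hν => ?_⟩
  have hgraph := hK_unique _ (isStableMatching_iff_isKernel_graph.1 hν)
  exact DFunLike.coe_injective (Function.graph_injective hgraph)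
end
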